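/- Define ρ₀ : ℝ → ℝ by ρ₀(x) = 2/3 for 0 ≤ x ≤ 1/2, ρ₀(x) = 4/3 for 1/2 < x ≤ 1, and ρ₀(x) = 0 otherwise, and define f : ℝ → ℝ by f(x) = x + 1/2 for 0 ≤ x ≤ 1/2, f(x) = 2(1 − x) for 1/2 < x ≤ 1, and f(x) = x otherwise. Let μ₀ be Lebesgue measure on ℝ with density ρ₀. Then the pushforward of μ₀ under f equals μ₀. -/

import Mathlib

open MeasureTheory

/-- The invariant density of the piecewise expanding map of Section 2.2. -/
noncomputable def rho12 (x : ℝ) : ℝ :=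
  if 0 ≤ x ∧ x ≤ 1/2 then 2/3 else if 1/2 < x ∧ x ≤ 1 then 4/3 else 0

/-- The piecewise expanding map of Section 2.2 (extended by the identity off `[0,1]`). -/
noncomputable def f12 (x : ℝ) : ℝ :=
  if 0 ≤ x ∧ x ≤ 1/2 then x + 1/2 else if 1/2 < x ∧ x ≤ 1 then 2*(1-x) else x

theorem measurable_f12 : Measurable f12 := by
  unfold f12
  exact Measurable.ite measurableSet_Icc (by fun_prop)
    (Measurable.ite measurableSet_Ioc (by fun_prop) (by fun_prop))

theorem withDensity_rho12 :
    volume.withDensity (fun x => ENNReal.ofReal (rho12 x)) =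
      ENNReal.ofReal (2/3) • volume.restrict (Set.Icc (0 : ℝ) (1/2)) +
        ENNReal.ofReal (4/3) • volume.restrict (Set.Ioc (1/2 : ℝ) 1) := by
  have h : (fun x => ENNReal.ofReal (rho12 x)) =
      (Set.Icc (0 : ℝ) (1/2)).indicator (fun _ => ENNReal.ofReal (2/3)) +
        (Set.Ioc (1/2 : ℝ) 1).indicator (fun _ => ENNReal.ofReal (4/3)) := by
    funext x
    simp only [rho12, Pi.add_apply, Set.indicator_apply, Set.mem_Icc, Set.mem_Ioc]
    split_ifs with h₁ h₂ h₂
    · linarith [h₁.2, h₂.1]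
    all_goals simp
  rw [h, withDensity_add_left (measurable_const.indicator measurableSet_Icc),
    withDensity_indicator measurableSet_Icc, withDensity_indicator measurableSet_Ioc,
    withDensity_const, withDensity_const]

theorem volume_preimage_f12_inter_Icc (s : Set ℝ) :
    volume (f12 ⁻¹' s ∩ Set.Icc 0 (1/2)) = volume (s ∩ Set.Ioc (1/2) 1) := by
  have h : f12 ⁻¹' s ∩ Set.Icc 0 (1/2) = (fun x => x + 1/2) ⁻¹' (s ∩ Set.Icc (1/2) 1) := by
    ext x
    have hx : x ∈ Set.Icc (0 : ℝ) (1/2) ↔ x + 1/2 ∈ Set.Icc (1/2 : ℝ) 1 := by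
      simp only [Set.mem_Icc]
      constructor <;> rintro ⟨h₁, h₂⟩ <;> constructor <;> linarith
    simp only [Set.mem_inter_iff, Set.mem_preimage, ← hx]
    refine and_congr_left fun h => ?_
    rw [f12, if_pos (Set.mem_Icc.1 h)]
  rw [h, measure_preimage_add_right]
  exact measure_congr ((ae_eq_refl s).inter Ioc_ae_eq_Icc.symm)

theorem volume_preimage_f12_inter_Ioc {s : Set ℝ} (hs : MeasurableSet s) :
    volume (f12 ⁻¹' s ∩ Set.Ioc (1/2) 1) =
      ENNReal.ofReal (1/2) *
        (volume (s ∩ Set.Icc 0 (1/2)) + volume (s ∩ Set.Ioc (1/2) 1)) := by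
  have h : f12 ⁻¹' s ∩ Set.Ioc (1/2) 1 =
      (fun x => -2 * x) ⁻¹' ((fun x => x + 2) ⁻¹' (s ∩ Set.Ico 0 1)) := by
    ext x
    have hx : x ∈ Set.Ioc (1/2 : ℝ) 1 ↔ -2 * x + 2 ∈ Set.Ico (0 : ℝ) 1 := by
      simp only [Set.mem_Ioc, Set.mem_Ico]
      constructor <;> rintro ⟨h₁, h₂⟩ <;> constructor <;> linarith
    simp only [Set.mem_inter_iff, Set.mem_preimage, ← hx]
    refine and_congr_left fun h => ?_
    rw [f12, if_neg (fun h' => absurd h.1 h'.2.not_gt), if_pos (Set.mem_Ioc.1 h),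
      show 2 * (1 - x) = -2 * x + 2 by ring]
  have hadd : volume (s ∩ Set.Ico 0 1) =
      volume (s ∩ Set.Icc 0 (1/2)) + volume (s ∩ Set.Ioc (1/2) 1) := by
    rw [measure_congr ((ae_eq_refl s).inter (Ico_ae_eq_Icc (a := (0 : ℝ)) (b := 1))),
      ← Set.Icc_union_Ioc_eq_Icc (show (0 : ℝ) ≤ 1/2 by norm_num) (by norm_num),
      Set.inter_union_distrib_left,
      measure_union _ (hs.inter measurableSet_Ioc)]
    exact Set.disjoint_left.2 fun x h₁ h₂ => h₁.2.2.not_gt h₂.2.1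
  rw [h, Real.volume_preimage_mul_left (by norm_num), measure_preimage_add_right, hadd]
  norm_num [abs_of_pos]

/-- The measure with density `ρ₀ = 2/3` on `[0,1/2]`, `4/3` on `(1/2,1]` is invariant
under the piecewise expanding map `f`. -/
theorem stmt12 :
    Measure.map f12 (volume.withDensity (fun x => ENNReal.ofReal (rho12 x))) =
      volume.withDensity (fun x => ENNReal.ofReal (rho12 x)) := by
  rw [withDensity_rho12]
  ext s hs
  rw [Measure.map_apply measurable_f12 hs]
  simp only [Measure.add_apply, Measure.smul_apply, smul_eq_mul,
    Measure.restrict_apply hs, Measure.restrict_apply (measurable_f12 hs),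
    volume_preimage_f12_inter_Icc, volume_preimage_f12_inter_Ioc hs]
  rw [← mul_assoc, ← ENNReal.ofReal_mul (by norm_num), mul_add, add_left_comm, ← add_mul,
    ← ENNReal.ofReal_add (by norm_num) (by norm_num)]
  norm_num
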